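/- Let ℓ₀ > 0 and ℓ ≥ 3 be integers, and let p = p(n) be a function with p = ω(p_{ℓ₀,ℓ}(n)), where p_{ℓ₀,ℓ}(n) = n^{-(ℓ-1)/ℓ} if ℓ < ℓ₀ and p_{ℓ₀,ℓ}(n) = n^{-1} if ℓ ≥ ℓ₀. Then asymptotically almost surely the random graph G(n,p) is an (n, p, ℓ₀, ℓ)-graph. -/

import Mathlib

open Filter Finset SimpleGraph
open scoped Classical

/-- The probability, in the binomial random graph `G(n,p)`, of the event `A`. -/
noncomputable def erProb (n : ℕ) (p : ℝ) (A : SimpleGraph (Fin n) → Prop) : ℝ :=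
  ∑' G : SimpleGraph (Fin n),
    if A G then p ^ G.edgeSet.ncard * (1 - p) ^ (n.choose 2 - G.edgeSet.ncard) else 0

/-- The number of edges of `G` between two (disjoint) sets `V₁`, `V₂`. -/
noncomputable def edgesBetween {n : ℕ} (G : SimpleGraph (Fin n))
    (V₁ V₂ : Finset (Fin n)) : ℕ :=
  ((V₁ ×ˢ V₂).filter fun e => G.Adj e.1 e.2).card

/-- The number of cherries (copies of `K_{1,2}`) of `G` with centre in `V₁`, one leaf in
`V₂` and the other leaf in `V₃`. -/
noncomputable def cherriesBetween {n : ℕ} (G : SimpleGraph (Fin n))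
    (V₁ V₂ V₃ : Finset (Fin n)) : ℕ :=
  ((V₁ ×ˢ V₂ ×ˢ V₃).filter fun e => G.Adj e.1 e.2.1 ∧ G.Adj e.1 e.2.2).card

/-- The total number of cherries (copies of `K_{1,2}`) in `G`. -/
noncomputable def cherryCount {n : ℕ} (G : SimpleGraph (Fin n)) : ℕ :=
  (Finset.univ.filter fun e : Fin n × Fin n × Fin n =>
    G.Adj e.1 e.2.1 ∧ G.Adj e.1 e.2.2 ∧ e.2.1 < e.2.2).card

/-- The total number of triangles (copies of `C₃`) in `G`. -/
noncomputable def triangleCount {n : ℕ} (G : SimpleGraph (Fin n)) : ℕ :=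
  (Finset.univ.filter fun e : Fin n × Fin n × Fin n =>
    e.1 < e.2.1 ∧ e.2.1 < e.2.2 ∧ G.Adj e.1 e.2.1 ∧ G.Adj e.1 e.2.2 ∧ G.Adj e.2.1 e.2.2).card

/-- The total number of copies of the four-cycle `C₄` in `G` (each copy `a b c d` counted
once, normalised so that `a` is the smallest vertex and `b < d`). -/
noncomputable def c4Count {n : ℕ} (G : SimpleGraph (Fin n)) : ℕ :=
  (Finset.univ.filter fun e : Fin n × Fin n × Fin n × Fin n =>
    G.Adj e.1 e.2.1 ∧ G.Adj e.2.1 e.2.2.1 ∧ G.Adj e.2.2.1 e.2.2.2 ∧ G.Adj e.2.2.2 e.1 ∧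
    e.1 < e.2.1 ∧ e.1 < e.2.2.1 ∧ e.1 < e.2.2.2 ∧ e.2.1 < e.2.2.2).card

/-- The number of copies of the cycle `C_k` in `G` whose `i`-th vertex (in cyclic order)
lies in `V i`. -/
noncomputable def cyclesBetween {n : ℕ} (G : SimpleGraph (Fin n)) (k : ℕ)
    (V : Fin k → Finset (Fin n)) : ℕ :=
  (Finset.univ.filter fun v : Fin k → Fin n =>
    (∀ i, v i ∈ V i) ∧ ∀ i : Fin k, G.Adj (v i) (v (i + ⟨1 % k, Nat.mod_lt 1 i.pos⟩))).card

/-- `G` is an `(n, p, ℓ₀, ℓ)`-graph: conditions (A1), (A2) and (A3). -/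
def IsABGraph (n : ℕ) (p : ℝ) (ℓ₀ ℓ : ℕ) (G : SimpleGraph (Fin n)) : Prop :=
  -- (A1)
  (∀ V₁ V₂ : Finset (Fin n), Disjoint V₁ V₂ →
      (n : ℝ) / ℓ₀ ≤ (V₁.card : ℝ) → (n : ℝ) / ℓ₀ ≤ (V₂.card : ℝ) →
      p / 2 * V₁.card * V₂.card ≤ (edgesBetween G V₁ V₂ : ℝ)) ∧
  -- (A2)
  ((∀ V₁ V₂ V₃ : Finset (Fin n), Disjoint V₁ V₂ → Disjoint V₁ V₃ → Disjoint V₂ V₃ →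
      (n : ℝ) / ℓ₀ ≤ (V₁.card : ℝ) → (n : ℝ) / ℓ₀ ≤ (V₂.card : ℝ) →
      (n : ℝ) / ℓ₀ ≤ (V₃.card : ℝ) →
      p ^ 2 / 4 * V₁.card * V₂.card * V₃.card ≤ (cherriesBetween G V₁ V₂ V₃ : ℝ)) ∧
    (cherryCount G : ℝ) ≤ p ^ 2 * (n : ℝ) ^ 3) ∧
  -- (A3)
  ((∀ k : ℕ, ℓ ≤ k → k < ℓ₀ → ∀ V : Fin k → Finset (Fin n),
      (∀ i j, i ≠ j → Disjoint (V i) (V j)) →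
      (∀ i, (n : ℝ) / (ℓ₀ : ℝ) ^ 2 ≤ ((V i).card : ℝ)) →
      1 / 2 * p ^ k * ∏ i, ((V i).card : ℝ) ≤ (cyclesBetween G k V : ℝ)) ∧
    (triangleCount G : ℝ) ≤ p ^ 3 * (n : ℝ) ^ 3 ∧
    (c4Count G : ℝ) ≤ p ^ 4 * (n : ℝ) ^ 4)

/-- The critical probability `p_{ℓ₀,ℓ}(n)`. -/
noncomputable def pCrit (ℓ₀ ℓ : ℕ) (n : ℕ) : ℝ :=
  if ℓ < ℓ₀ then (n : ℝ) ^ (-(((ℓ : ℝ) - 1) / (ℓ : ℝ))) else (n : ℝ)⁻¹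


/-!
Copies of a fixed pattern `H` in `G(n,p)` are controlled by `Φ = Φ_H(n,p)`, the minimum of
`n ^ v(K) * p ^ e(K)` over the subgraphs `K` of `H` with an edge: two copies are dependent only if
they share such a `K`, so Janson's `Δ` is at most a constant times `(n ^ v(H) * p ^ e(H)) ^ 2 / Φ`.
By Janson's inequality, prescribed linear-sized vertex sets span fewer than half the expected number
of transversal copies with probability at most `exp (-c Φ)`, which beats the `2 ^ (n * v(H))`
choices of the sets as soon as `Φ / n → ∞`. The upper bounds need only Chebyshev's inequality and
`Φ → ∞`; the factor two to spare is the symmetry of the pattern.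

To bound `Φ` from below: a subgraph of a forest, or a proper subgraph of a cycle, has more vertices
than edges and so contributes at least `n * (n * p)` once `n * p ≥ 1`, while the whole cycle `C_k`
contributes `(n * p) ^ k`. The latter is much larger than `n` for all `k ≥ ℓ` precisely when
`p = ω(n ^ (-(ℓ - 1) / ℓ))`.
-/

open MeasureTheory ProbabilityTheory unitInterval Topology

section RandomSubset

lemma iIndepFun_mem_setBernoulli {α : Type*} (u : Set α) (p : I) :
    iIndepFun (fun (a : α) (S : Set α) => a ∈ S) setBer(u, p) := by
  set P := fun a : α => toNNReal p • Measure.dirac (a ∈ u) + toNNReal (σ p) • Measure.dirac False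
  have hset : Measurable fun t : α → Prop => {a | t a} := MeasurableEquiv.setOfPred.measurable
  have hlaw (a : α) : setBer(u, p).map (a ∈ ·) = P a := by
    rw [setBernoulli_eq_map, Measure.map_map (measurable_set_mem a) hset]
    exact Measure.infinitePi_map_eval P a
  rw [iIndepFun_iff_map_fun_eq_infinitePi_map measurable_set_mem, funext hlaw,
    setBernoulli_eq_map, Measure.map_map (measurable_pi_lambda _ measurable_set_mem) hset]
  exact Measure.map_id

lemma setBernoulli_real_Ici {α : Type*} {u A : Set α} {p : I} (hA : A ⊆ u) (hfin : A.Finite) :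
    setBer(u, p).real (Set.Ici A) = p ^ A.ncard := by
  have hpre : (fun t : α → Prop => {a | t a}) ⁻¹' Set.Ici A
      = (hfin.toFinset : Set α).pi fun _ => {True} := by
    ext t; simp [Set.subset_def]
  rw [measureReal_def, setBernoulli_apply', hpre,
    Measure.infinitePi_pi _ fun _ _ => MeasurableSet.of_discrete, Finset.prod_congr rfl
      (g := fun _ => ((toNNReal p : NNReal) : ENNReal))]
  · simp [Set.ncard_eq_toFinset_card A hfin]
  · intro a ha
    have : a ∈ u := hA (by simpa using ha)
    simp [this, Set.indicator]

variable {α ι : Type*} {F : Finset ι} {A : ι → Set α}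

/-- The number of members of the family `(A i)_{i ∈ F}` contained in `S`, as a real random
variable of the set `S`. -/
noncomputable def containedCount (F : Finset ι) (A : ι → Set α) (S : Set α) : ℝ :=
  #{i ∈ F | A i ⊆ S}

/-- The mean of `containedCount F A` for a `p`-random set. -/
noncomputable def containedMean (F : Finset ι) (A : ι → Set α) (p : ℝ) : ℝ :=
  ∑ i ∈ F, p ^ (A i).ncard

/-- Janson's `Δ`: the sum of the probabilities that both `A i` and `A j` are contained in a
`p`-random set, over ordered pairs (including `i = j`) with `A i` and `A j` not disjoint. -/
noncomputable def jansonDelta (F : Finset ι) (A : ι → Set α) (p : ℝ) : ℝ :=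
  ∑ i ∈ F, ∑ j ∈ F with ¬ Disjoint (A i) (A j), p ^ (A i ∪ A j).ncard

lemma containedCount_eq_sum_indicator (F : Finset ι) (A : ι → Set α) (S : Set α) :
    containedCount F A S = ∑ i ∈ F, (Set.Ici (A i)).indicator 1 S := by
  simp [containedCount, Set.indicator, ← Finset.sum_boole]

lemma containedCount_mono (F : Finset ι) (A : ι → Set α) : Monotone (containedCount F A) :=
  fun _ _ hST => Nat.cast_le.2 <| card_le_card <|
    Finset.monotone_filter_right _ fun _ _ hi => hi.trans hST

lemma containedCount_union_of_disjoint {B : Set α} (hB : ∀ i ∈ F, Disjoint B (A i)) (S : Set α) :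
    containedCount F A (B ∪ S) = containedCount F A S := by
  unfold containedCount
  congr 2
  refine filter_congr fun i hi => ⟨fun h => ?_, fun h => h.trans Set.subset_union_right⟩
  exact (hB i hi).symm.subset_right_of_subset_union h

variable [Finite α] {u : Set α} {p : I}

lemma setIntegral_Ici_setBernoulli {A : Set α} (hA : A ⊆ u) (f : Set α → ℝ) :
    ∫ S in Set.Ici A, f S ∂setBer(u, p) = p ^ A.ncard * ∫ S, f (A ∪ S) ∂setBer(u, p) := by
  cases nonempty_fintype α
  set inside : (A.toFinset → Prop) → ℝ := fun x => if ∀ a, x a then 1 else 0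
  set outside : ((A.toFinsetᶜ : Finset α) → Prop) → ℝ := fun y => f (A ∪ {a | ∃ h, y ⟨a, h⟩})
  have hindep := ((iIndepFun_mem_setBernoulli u p).indepFun_finset A.toFinset A.toFinsetᶜ
    disjoint_compl_right measurable_set_mem).comp (φ := inside) (ψ := outside)
    .of_discrete .of_discrete
  have hinside (S : Set α) : inside (fun a => a.1 ∈ S) = (Set.Ici A).indicator 1 S := by
    simp [inside, Set.indicator, Set.subset_def]
  have houtside (S : Set α) : outside (fun a => a.1 ∈ S) = f (A ∪ S) := by
    simp only [outside]
    congr 1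
    ext a
    by_cases ha : a ∈ A <;> simp [ha]
  calc ∫ S in Set.Ici A, f S ∂setBer(u, p)
      = ∫ S, (Set.Ici A).indicator 1 S * f (A ∪ S) ∂setBer(u, p) := by
        rw [← integral_indicator .of_discrete]
        congr 1 with S
        by_cases hS : S ∈ Set.Ici A
        · simp [hS, Set.union_eq_self_of_subset_left (Set.mem_Ici.1 hS)]
        · simp [hS]
    _ = (∫ S, (Set.Ici A).indicator 1 S ∂setBer(u, p)) * ∫ S, f (A ∪ S) ∂setBer(u, p) := by
        simpa only [Function.comp_def, hinside, houtside] using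
          hindep.integral_fun_mul_eq_mul_integral .of_discrete .of_discrete
    _ = p ^ A.ncard * ∫ S, f (A ∪ S) ∂setBer(u, p) := by
        rw [integral_indicator_one .of_discrete, setBernoulli_real_Ici hA A.toFinite]

lemma setIntegral_Ici_setBernoulli_le {A : Set α} (hA : A ⊆ u) {f : Set α → ℝ}
    (hf : Antitone f) :
    ∫ S in Set.Ici A, f S ∂setBer(u, p) ≤ p ^ A.ncard * ∫ S, f S ∂setBer(u, p) := by
  rw [setIntegral_Ici_setBernoulli hA]
  exact mul_le_mul_of_nonneg_left (integral_mono .of_finite .of_finite fun S =>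
    hf Set.subset_union_right) (pow_nonneg p.2.1 _)

lemma integral_containedCount_mul (F : Finset ι) (A : ι → Set α) (f : Set α → ℝ)
    (P : Measure (Set α)) [IsFiniteMeasure P] :
    ∫ S, containedCount F A S * f S ∂P = ∑ i ∈ F, ∫ S in Set.Ici (A i), f S ∂P := by
  simp_rw [containedCount_eq_sum_indicator, Finset.sum_mul]
  rw [integral_finsetSum _ fun _ _ => .of_finite]
  refine Finset.sum_congr rfl fun i _ => ?_
  rw [← integral_indicator .of_discrete]
  simp [Set.indicator]

lemma integral_containedCount (hA : ∀ i ∈ F, A i ⊆ u) :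
    ∫ S, containedCount F A S ∂setBer(u, p) = containedMean F A p := by
  have := integral_containedCount_mul F A 1 setBer(u, p)
  simp only [Pi.one_apply, mul_one] at this
  rw [this]
  refine Finset.sum_congr rfl fun i hi => ?_
  simp [setBernoulli_real_Ici (hA i hi) (A i).toFinite]

-- The count splits into the sets disjoint from `A i`, whose number `Z` is independent of `A i ⊆ S`,
-- and the others, whose number `Y` enters only through `exp (t * Y) ≥ 1 + t * Y`. The factor
-- `exp (t * Z)` is decreasing, hence negatively correlated with `A i ∪ A j ⊆ S`.
lemma add_mul_mul_mgf_le_setIntegral_Ici_exp (hA : ∀ i ∈ F, A i ⊆ u) {t : ℝ} (ht : t ≤ 0)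
    {i : ι} (hi : i ∈ F) :
    ((p : ℝ) ^ (A i).ncard + t * ∑ j ∈ F with ¬ Disjoint (A i) (A j), (p : ℝ) ^ (A i ∪ A j).ncard)
        * mgf (containedCount F A) setBer(u, p) t
      ≤ ∫ S in Set.Ici (A i), Real.exp (t * containedCount F A S) ∂setBer(u, p) := by
  set P := setBer(u, p)
  set N := {j ∈ F | ¬ Disjoint (A i) (A j)}
  set Y := containedCount N A
  set Z := containedCount {j ∈ F | Disjoint (A i) (A j)} A
  set c := (p : ℝ) ^ (A i).ncard + t * ∑ j ∈ N, (p : ℝ) ^ (A i ∪ A j).ncard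
  have hsplit (S : Set α) : containedCount F A S = Z S + Y S := by
    simp only [containedCount_eq_sum_indicator, Y, Z, N]
    exact (Finset.sum_filter_add_sum_filter_not F _ _).symm
  have hexpZ : Antitone fun S => Real.exp (t * Z S) := fun S T hST =>
    Real.exp_le_exp.2 (mul_le_mul_of_nonpos_left (containedCount_mono _ _ hST) ht)
  have hmgf : mgf (containedCount F A) P t ≤ ∫ S, Real.exp (t * Z S) ∂P :=
    integral_mono .of_finite .of_finite fun S => Real.exp_le_exp.2 <|
      mul_le_mul_of_nonpos_left (by rw [hsplit]; simp [Y, containedCount]) ht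
  obtain hc | hc := le_total c 0
  · exact (mul_nonpos_of_nonpos_of_nonneg hc mgf_nonneg).trans
      (integral_nonneg fun _ => (Real.exp_pos _).le)
  have hself : ∫ S in Set.Ici (A i), Real.exp (t * Z S) ∂P
      = p ^ (A i).ncard * ∫ S, Real.exp (t * Z S) ∂P := by
    rw [setIntegral_Ici_setBernoulli (hA i hi)]
    simp only [Z, containedCount_union_of_disjoint fun _ hj => (mem_filter.1 hj).2]
    rfl
  have hpair : ∫ S in Set.Ici (A i), Y S * Real.exp (t * Z S) ∂P
      ≤ (∑ j ∈ N, (p : ℝ) ^ (A i ∪ A j).ncard) * ∫ S, Real.exp (t * Z S) ∂P := by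
    rw [integral_containedCount_mul, Finset.sum_mul]
    refine Finset.sum_le_sum fun j hj => ?_
    rw [Measure.restrict_restrict .of_discrete, Set.Ici_inter_Ici, sup_comm]
    exact setIntegral_Ici_setBernoulli_le
      (Set.union_subset (hA i hi) (hA j (mem_filter.1 hj).1)) hexpZ
  calc c * mgf (containedCount F A) P t
      ≤ c * ∫ S, Real.exp (t * Z S) ∂P := mul_le_mul_of_nonneg_left hmgf hc
    _ ≤ ∫ S in Set.Ici (A i), Real.exp (t * Z S) ∂P
          + t * ∫ S in Set.Ici (A i), Y S * Real.exp (t * Z S) ∂P := by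
        rw [hself]; simp only [c]; nlinarith [mul_le_mul_of_nonpos_left hpair ht]
    _ = ∫ S in Set.Ici (A i), (1 + t * Y S) * Real.exp (t * Z S) ∂P := by
        rw [← integral_const_mul, ← integral_add .of_finite .of_finite]
        congr 1 with S; ring
    _ ≤ ∫ S in Set.Ici (A i), Real.exp (t * containedCount F A S) ∂P := by
        refine integral_mono .of_finite .of_finite fun S => ?_
        simp only [hsplit, mul_add, Real.exp_add]
        rw [mul_comm (Real.exp _)]
        gcongr
        linarith [Real.add_one_le_exp (t * Y S)]

lemma containedMean_add_le_deriv_cgf (hA : ∀ i ∈ F, A i ⊆ u) {t : ℝ} (ht : t ≤ 0) :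
    containedMean F A p + t * jansonDelta F A p
      ≤ deriv (cgf (containedCount F A) setBer(u, p)) t := by
  rw [deriv_cgf (by simp [integrableExpSet, Integrable.of_finite]),
    le_div_iff₀ (mgf_pos .of_finite), integral_containedCount_mul, containedMean, jansonDelta,
    Finset.mul_sum, ← Finset.sum_add_distrib, Finset.sum_mul]
  exact Finset.sum_le_sum fun i hi => add_mul_mul_mgf_le_setIntegral_Ici_exp hA ht hi

lemma cgf_containedCount_le (hA : ∀ i ∈ F, A i ⊆ u) {t : ℝ} (ht : t ≤ 0) :
    cgf (containedCount F A) setBer(u, p) t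
      ≤ t * containedMean F A p + t ^ 2 * jansonDelta F A p / 2 := by
  set X := containedCount F A
  set P := setBer(u, p)
  have hcgf : Differentiable ℝ (cgf X P) := fun s =>
    (analyticAt_cgf (by simp [integrableExpSet, Integrable.of_finite])).differentiableAt
  set gap : ℝ → ℝ := fun s =>
    s * containedMean F A p + s ^ 2 * jansonDelta F A p / 2 - cgf X P s
  have hgap (s : ℝ) :
      HasDerivAt gap (containedMean F A p + s * jansonDelta F A p - deriv (cgf X P) s) s := by
    refine ((((hasDerivAt_id s).mul_const _).add
      (((hasDerivAt_pow 2 s).mul_const _).div_const 2)).sub (hcgf s).hasDerivAt).congr_deriv ?_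
    simp; ring
  have hanti : AntitoneOn gap (Set.Iic 0) := by
    refine antitoneOn_of_deriv_nonpos (convex_Iic 0)
      (fun s _ => (hgap s).continuousAt.continuousWithinAt)
      (fun s _ => (hgap s).differentiableAt.differentiableWithinAt) fun s hs => ?_
    rw [interior_Iic, Set.mem_Iio] at hs
    rw [(hgap s).deriv]
    linarith [containedMean_add_le_deriv_cgf (p := p) hA hs.le]
  have h0 : gap 0 ≤ gap t := hanti ht Set.self_mem_Iic ht
  simp only [gap, cgf_zero] at h0
  linarith

/-- **Janson's inequality**. -/
lemma setBernoulli_real_containedCount_le (hA : ∀ i ∈ F, A i ⊆ u) {D s : ℝ}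
    (hD : jansonDelta F A p ≤ D) (hs : 0 ≤ s) :
    setBer(u, p).real {S | containedCount F A S ≤ containedMean F A p - s}
      ≤ Real.exp (-(s ^ 2 / (2 * D))) := by
  obtain hD0 | hD0 := le_or_gt D 0
  · exact measureReal_le_one.trans <| Real.one_le_exp <| neg_nonneg.2 <|
      div_nonpos_of_nonneg_of_nonpos (sq_nonneg s) (by linarith)
  have ht : -(s / D) ≤ 0 := by simpa using div_nonneg hs hD0.le
  refine (measure_le_le_exp_cgf _ ht .of_finite).trans (Real.exp_le_exp.2 ?_)
  calc -(-(s / D)) * (containedMean F A p - s) + cgf (containedCount F A) setBer(u, p) (-(s / D))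
      ≤ s / D * (containedMean F A p - s) +
          (-(s / D) * containedMean F A p + (-(s / D)) ^ 2 * D / 2) := by
        rw [neg_neg]
        gcongr
        refine (cgf_containedCount_le hA ht).trans ?_
        gcongr
    _ = -(s ^ 2 / (2 * D)) := by field_simp; ring

lemma variance_containedCount_le (hA : ∀ i ∈ F, A i ⊆ u) :
    Var[containedCount F A; setBer(u, p)] ≤ jansonDelta F A p := by
  rw [funext (containedCount_eq_sum_indicator F A), variance_fun_sum' fun _ _ => .of_discrete]
  refine Finset.sum_le_sum fun i hi => ?_
  rw [sum_filter]
  refine Finset.sum_le_sum fun j hj => ?_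
  have hprod : (Set.Ici (A i)).indicator (1 : Set α → ℝ) * (Set.Ici (A j)).indicator 1
      = (Set.Ici (A i ∪ A j)).indicator 1 := by
    rw [← Set.inter_indicator_one, Set.Ici_inter_Ici]
    rfl
  rw [covariance_eq_sub .of_discrete .of_discrete, hprod]
  simp only [integral_indicator_one .of_discrete]
  rw [setBernoulli_real_Ici (Set.union_subset (hA i hi) (hA j hj)) (Set.toFinite _),
    setBernoulli_real_Ici (hA i hi) (Set.toFinite _),
    setBernoulli_real_Ici (hA j hj) (Set.toFinite _)]
  split_ifs with h
  · rw [Set.ncard_union_eq h, pow_add, sub_self]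
  · exact sub_le_self _ (mul_nonneg (pow_nonneg p.2.1 _) (pow_nonneg p.2.1 _))

lemma setBernoulli_real_lt_containedCount_le (hA : ∀ i ∈ F, A i ⊆ u) {s : ℝ}
    (hs : 0 < s) (hmean : containedMean F A p ≤ s) :
    setBer(u, p).real {S | 2 * s < containedCount F A S} ≤ jansonDelta F A p / s ^ 2 := by
  have hsub : {S | 2 * s < containedCount F A S}
      ⊆ {S | s ≤ |containedCount F A S - ∫ T, containedCount F A T ∂setBer(u, p)|} := by
    intro S (hS : 2 * s < _)
    rw [Set.mem_ofPred_eq, integral_containedCount hA]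
    exact (by linarith : s ≤ _).trans (le_abs_self _)
  calc setBer(u, p).real {S | 2 * s < containedCount F A S}
      ≤ Var[containedCount F A; setBer(u, p)] / s ^ 2 :=
        (measureReal_mono hsub).trans <| ENNReal.toReal_le_of_le_ofReal
          (div_nonneg (variance_nonneg _ _) (sq_nonneg s))
          (meas_ge_le_variance_div_sq .of_discrete hs)
    _ ≤ jansonDelta F A p / s ^ 2 := by gcongr; exact variance_containedCount_le hA

end RandomSubset

section GraphCopies

variable {W V : Type*}

lemma map_edgeSet_binomialRandom (V : Type*) [Countable V] (p : I) :
    G(V, p).map edgeSet = setBer(Sym2.diagSetᶜ, p) := by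
  rw [binomialRandom, measurableEmbedding_edgeSet.map_comap]
  refine Measure.restrict_eq_self_of_ae_mem ?_
  filter_upwards [setBernoulli_ae_subset] with S hS
  exact ⟨fromEdgeSet S, (edgeSet_fromEdgeSet S).trans
    (sdiff_eq_left.2 (Set.subset_compl_iff_disjoint_right.1 hS))⟩

lemma binomialRandom_real_edgeSet_preimage [Finite V] (p : I) (𝒮 : Set (Set (Sym2 V))) :
    G(V, p).real {G | G.edgeSet ∈ 𝒮} = setBer(Sym2.diagSetᶜ, p).real 𝒮 := by
  rw [← map_edgeSet_binomialRandom, map_measureReal_apply measurableEmbedding_edgeSet.measurable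
    .of_discrete]
  rfl

/-- The edge set of the copy of `H` placed by `v`. -/
def copyEdgeSet (H : SimpleGraph W) (v : W ↪ V) : Set (Sym2 V) := (H.map v).edgeSet

/-- The number of embeddings in `F` that map the pattern `H` into `G`. -/
noncomputable def numCopies (H : SimpleGraph W) (F : Finset (W ↪ V)) (G : SimpleGraph V) : ℕ :=
  #(F.filter fun v : W ↪ V => H.map v ≤ G)

/-- The quantity usually denoted `Φ_H(n, p)`: the minimum of `n ^ v(K) * p ^ e(K)` over the
subgraphs `K` of `H` with at least one edge. It has the junk value `0` if `H` has no edge. -/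
noncomputable def minExpectedCopies (H : SimpleGraph W) (n p : ℝ) : ℝ :=
  ⨅ K : {K : SimpleGraph W // K ≤ H ∧ K ≠ ⊥}, n ^ K.1.support.ncard * p ^ K.1.edgeSet.ncard

lemma minExpectedCopies_le [Finite W] {H K : SimpleGraph W} (hKH : K ≤ H) (hK : K ≠ ⊥) (n p : ℝ) :
    minExpectedCopies H n p ≤ n ^ K.support.ncard * p ^ K.edgeSet.ncard :=
  ciInf_le (Set.finite_range _).bddBelow (⟨K, hKH, hK⟩ : {K // K ≤ H ∧ K ≠ ⊥})

lemma le_minExpectedCopies {H : SimpleGraph W} (hH : H ≠ ⊥) {n p x : ℝ}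
    (hx : ∀ K ≤ H, K ≠ ⊥ → x ≤ n ^ K.support.ncard * p ^ K.edgeSet.ncard) :
    x ≤ minExpectedCopies H n p :=
  haveI : Nonempty {K // K ≤ H ∧ K ≠ ⊥} := ⟨H, le_rfl, hH⟩
  le_ciInf fun K => hx K.1 K.2.1 K.2.2

lemma ne_bot_of_minExpectedCopies_pos {H : SimpleGraph W} {n p : ℝ}
    (hpos : 0 < minExpectedCopies H n p) : H ≠ ⊥ := by
  rintro rfl
  have : IsEmpty {K : SimpleGraph W // K ≤ ⊥ ∧ K ≠ ⊥} := ⟨fun K => K.2.2 (le_bot_iff.1 K.2.1)⟩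
  simp [minExpectedCopies, Real.iInf_of_isEmpty] at hpos

lemma ncard_edgeSet_ne_zero [Finite W] {H : SimpleGraph W} (hH : H ≠ ⊥) : H.edgeSet.ncard ≠ 0 := by
  simpa [Set.ncard_eq_zero (Set.toFinite _)] using hH

lemma pos_and_pos_of_minExpectedCopies_pos [Finite W] {H : SimpleGraph W} {n p : ℝ} (hn : 0 ≤ n)
    (hp : 0 ≤ p) (hpos : 0 < minExpectedCopies H n p) : 0 < n ∧ 0 < p := by
  have hH := ne_bot_of_minExpectedCopies_pos hpos
  have hprod := (hpos.trans_le (minExpectedCopies_le le_rfl hH n p)).ne'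
  have hsupport : H.support.ncard ≠ 0 := by simpa [Set.ncard_eq_zero (Set.toFinite _)] using hH
  exact ⟨hn.lt_of_ne' fun h => hprod (by rw [h, zero_pow hsupport, zero_mul]),
    hp.lt_of_ne' fun h => hprod (by rw [h, zero_pow (ncard_edgeSet_ne_zero hH), mul_zero])⟩

lemma numCopies_eq_containedCount (H : SimpleGraph W) (F : Finset (W ↪ V)) (G : SimpleGraph V) :
    (numCopies H F G : ℝ) = containedCount F (copyEdgeSet H) G.edgeSet := by
  simp only [numCopies, containedCount, copyEdgeSet, edgeSet_subset_edgeSet]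

lemma ncard_copyEdgeSet (H : SimpleGraph W) (v : W ↪ V) :
    (copyEdgeSet H v).ncard = H.edgeSet.ncard := by
  rw [copyEdgeSet, edgeSet_map, Set.ncard_image_of_injective _ v.sym2Map.injective]

lemma containedMean_copyEdgeSet (H : SimpleGraph W) (F : Finset (W ↪ V)) (p : ℝ) :
    containedMean F (copyEdgeSet H) p = #F * p ^ H.edgeSet.ncard := by
  simp [containedMean, ncard_copyEdgeSet]

/-- The subgraph of `H` formed by the edges that the copy of `H` placed by `w` shares with the copy
placed by `v`. -/
def overlap (H : SimpleGraph W) (v w : W ↪ V) : SimpleGraph W := (H.map v).comap w ⊓ H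

lemma copyEdgeSet_overlap (H : SimpleGraph W) (v w : W ↪ V) :
    copyEdgeSet (overlap H v w) w = copyEdgeSet H v ∩ copyEdgeSet H w := by
  rw [copyEdgeSet, copyEdgeSet, copyEdgeSet, ← edgeSet_inf]
  congr 1
  ext a b
  simp only [overlap, map_adj, inf_adj, comap_adj]
  constructor
  · rintro ⟨x, y, ⟨hv, hw⟩, rfl, rfl⟩
    exact ⟨hv, x, y, hw, rfl, rfl⟩
  · rintro ⟨hv, x, y, hw, rfl, rfl⟩
    exact ⟨x, y, ⟨hv, hw⟩, rfl, rfl⟩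

lemma overlap_ne_bot {H : SimpleGraph W} {v w : W ↪ V}
    (h : ¬ Disjoint (copyEdgeSet H v) (copyEdgeSet H w)) : overlap H v w ≠ ⊥ := by
  contrapose h
  rw [Set.disjoint_iff_inter_eq_empty, ← copyEdgeSet_overlap, h, copyEdgeSet, edgeSet_map,
    edgeSet_bot, Set.image_empty]

lemma support_overlap_subset (H : SimpleGraph W) (v w : W ↪ V) :
    (overlap H v w).support ⊆ w ⁻¹' Set.range v := by
  rintro x ⟨y, ⟨-, a, b, -, ha, -⟩, -⟩
  exact ⟨a, ha⟩

lemma ncard_union_copyEdgeSet_add_overlap [Finite V] (H : SimpleGraph W) (v w : W ↪ V) :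
    (copyEdgeSet H v ∪ copyEdgeSet H w).ncard + (overlap H v w).edgeSet.ncard
      = 2 * H.edgeSet.ncard := by
  rw [← ncard_copyEdgeSet (overlap H v w) w, copyEdgeSet_overlap, Set.ncard_union_add_ncard_inter,
    ncard_copyEdgeSet, ncard_copyEdgeSet, two_mul]

variable [Fintype W] [Fintype V]

lemma sum_card_pow_card_preimage_range_le (v : W ↪ V) :
    ∑ w : W ↪ V, (Fintype.card V : ℝ) ^ #{x | w x ∈ Set.range v}
      ≤ ((Fintype.card W + 1) * Fintype.card V) ^ Fintype.card W := by
  set n : ℝ := (Fintype.card V : ℝ)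
  set weight : V → ℝ := fun y => if y ∈ Set.range v then n else 1
  have hweight : ∑ y, weight y ≤ (Fintype.card W + 1) * n := by
    have hrange : #{y | y ∈ Set.range v} = Fintype.card W := by
      rw [← card_univ, ← card_map v]
      congr 1
      ext y
      simp
    calc ∑ y, weight y = Fintype.card W * n + #{y | y ∉ Set.range v} := by
          simp only [weight, sum_ite, sum_const, nsmul_eq_mul, mul_one, hrange]
      _ ≤ Fintype.card W * n + n := by
          gcongr
          exact Nat.cast_le.2 (card_le_univ _)
      _ = (Fintype.card W + 1) * n := by ring
  calc ∑ w : W ↪ V, n ^ #{x | w x ∈ Set.range v}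
      = ∑ w : W ↪ V, ∏ x, weight (w x) := by
        simp only [weight, prod_ite, prod_const, one_pow, mul_one]
    _ ≤ ∑ w : W → V, ∏ x, weight (w x) := by
        have hnonneg (w : W → V) : 0 ≤ ∏ x, weight (w x) :=
          prod_nonneg fun x _ => by simp only [weight]; positivity
        exact (sum_map univ ⟨_, DFunLike.coe_injective⟩
          fun w : W → V => ∏ x, weight (w x)).symm.trans_le (sum_le_univ_sum_of_nonneg hnonneg)
    _ = (∑ y, weight y) ^ Fintype.card W := by
        rw [← Fintype.piFinset_univ, ← prod_univ_sum]; simp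
    _ ≤ ((Fintype.card W + 1) * n) ^ Fintype.card W := by gcongr

lemma pow_ncard_union_mul_minExpectedCopies_le {H : SimpleGraph W} {v w : W ↪ V} {p : ℝ}
    (hp : 0 ≤ p) (h : ¬ Disjoint (copyEdgeSet H v) (copyEdgeSet H w)) :
    p ^ (copyEdgeSet H v ∪ copyEdgeSet H w).ncard * minExpectedCopies H (Fintype.card V) p
      ≤ (Fintype.card V : ℝ) ^ #{x | w x ∈ Set.range v} * p ^ (2 * H.edgeSet.ncard) := by
  have hn : 1 ≤ (Fintype.card V : ℝ) := by
    obtain ⟨e, -, -⟩ := Set.not_disjoint_iff.1 h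
    exact_mod_cast Fintype.card_pos_iff.2 ⟨e.out.1⟩
  have hsupport : (overlap H v w).support.ncard ≤ #{x | w x ∈ Set.range v} := by
    rw [← Set.ncard_coe_finset]
    exact Set.ncard_le_ncard fun x hx => by simpa using support_overlap_subset H v w hx
  set union := p ^ (copyEdgeSet H v ∪ copyEdgeSet H w).ncard
  calc union * minExpectedCopies H (Fintype.card V) p
      ≤ union * ((Fintype.card V : ℝ) ^ (overlap H v w).support.ncard
          * p ^ (overlap H v w).edgeSet.ncard) := by
        gcongr
        exact minExpectedCopies_le inf_le_right (overlap_ne_bot h) _ _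
    _ = (Fintype.card V : ℝ) ^ (overlap H v w).support.ncard * p ^ (2 * H.edgeSet.ncard) := by
        rw [← ncard_union_copyEdgeSet_add_overlap H v w, pow_add]; ring
    _ ≤ _ := by gcongr

lemma sum_pow_ncard_union_mul_minExpectedCopies_le (H : SimpleGraph W) (F : Finset (W ↪ V))
    (v : W ↪ V) {p : ℝ} (hp : 0 ≤ p) :
    (∑ w ∈ F with ¬ Disjoint (copyEdgeSet H v) (copyEdgeSet H w),
        p ^ (copyEdgeSet H v ∪ copyEdgeSet H w).ncard) * minExpectedCopies H (Fintype.card V) p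
      ≤ ((Fintype.card W + 1) * Fintype.card V) ^ Fintype.card W * p ^ (2 * H.edgeSet.ncard) := by
  rw [sum_mul]
  calc _ ≤ ∑ w ∈ F with ¬ Disjoint (copyEdgeSet H v) (copyEdgeSet H w),
          (Fintype.card V : ℝ) ^ #{x | w x ∈ Set.range v} * p ^ (2 * H.edgeSet.ncard) :=
        sum_le_sum fun w hw => pow_ncard_union_mul_minExpectedCopies_le hp (mem_filter.1 hw).2
    _ ≤ ∑ w : W ↪ V, (Fintype.card V : ℝ) ^ #{x | w x ∈ Set.range v} * p ^ (2 * H.edgeSet.ncard) :=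
        sum_le_univ_sum_of_nonneg fun w => by positivity
    _ ≤ _ := by
        rw [← sum_mul]
        gcongr
        exact sum_card_pow_card_preimage_range_le v

lemma jansonDelta_mul_minExpectedCopies_le (H : SimpleGraph W) (F : Finset (W ↪ V)) {p : ℝ}
    (hp : 0 ≤ p) :
    jansonDelta F (copyEdgeSet H) p * minExpectedCopies H (Fintype.card V) p
      ≤ #F * (((Fintype.card W + 1) * Fintype.card V) ^ Fintype.card W
          * p ^ (2 * H.edgeSet.ncard)) := by
  rw [jansonDelta, sum_mul, ← nsmul_eq_mul]
  exact sum_le_card_nsmul _ _ _ fun v _ => sum_pow_ncard_union_mul_minExpectedCopies_le H F v hp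

variable {H : SimpleGraph W} {F : Finset (W ↪ V)} {p : I}

lemma binomialRandom_real_numCopies_lt_le
    (hpos : 0 < minExpectedCopies H (Fintype.card V) p) :
    G(V, p).real {G | (numCopies H F G : ℝ) < 1 / 2 * p ^ H.edgeSet.ncard * #F}
      ≤ Real.exp (-(#F * minExpectedCopies H (Fintype.card V) p /
          (8 * ((Fintype.card W + 1) * Fintype.card V) ^ Fintype.card W))) := by
  set N : ℝ := (#F : ℝ)
  set e := H.edgeSet.ncard
  set Φ := minExpectedCopies H (Fintype.card V) p
  set C : ℝ := ((Fintype.card W + 1) * Fintype.card V) ^ Fintype.card W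
  have hp := (pos_and_pos_of_minExpectedCopies_pos (Nat.cast_nonneg _) p.2.1 hpos).2
  have hΔ : jansonDelta F (copyEdgeSet H) p ≤ N * (C * p ^ (2 * e)) / Φ :=
    (le_div_iff₀ hpos).2 (jansonDelta_mul_minExpectedCopies_le H F p.2.1)
  have hs : 0 ≤ N * p ^ e / 2 := by positivity
  calc G(V, p).real {G | (numCopies H F G : ℝ) < 1 / 2 * p ^ e * N}
      ≤ G(V, p).real {G | G.edgeSet ∈ {S | containedCount F (copyEdgeSet H) S ≤
          containedMean F (copyEdgeSet H) p - N * p ^ e / 2}} := by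
        refine measureReal_mono fun G hG => ?_
        rw [Set.mem_ofPred_eq, numCopies_eq_containedCount] at hG
        simp only [Set.mem_ofPred_eq, containedMean_copyEdgeSet]
        linarith
    _ ≤ Real.exp (-((N * p ^ e / 2) ^ 2 / (2 * (N * (C * p ^ (2 * e)) / Φ)))) := by
        rw [binomialRandom_real_edgeSet_preimage]
        exact setBernoulli_real_containedCount_le (fun _ _ => edgeSet_subset_compl_diagSet _) hΔ hs
    _ = Real.exp (-(N * Φ / (8 * C))) := by
        congr 2
        rw [mul_comm 2 e, pow_mul]
        field_simp
        ring

lemma binomialRandom_real_lt_numCopies_le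
    (hpos : 0 < minExpectedCopies H (Fintype.card V) p)
    (hF : 2 * (#F : ℝ) ≤ (Fintype.card V : ℝ) ^ Fintype.card W) :
    G(V, p).real {G | p ^ H.edgeSet.ncard * (Fintype.card V : ℝ) ^ Fintype.card W
        < numCopies H F G}
      ≤ 2 * (Fintype.card W + 1) ^ Fintype.card W / minExpectedCopies H (Fintype.card V) p := by
  set N : ℝ := (#F : ℝ)
  set e := H.edgeSet.ncard
  set Φ := minExpectedCopies H (Fintype.card V) p
  set M : ℝ := (Fintype.card V : ℝ) ^ Fintype.card W
  set C : ℝ := (Fintype.card W + 1 : ℝ) ^ Fintype.card W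
  obtain ⟨hn, hp⟩ := pos_and_pos_of_minExpectedCopies_pos (Nat.cast_nonneg _) p.2.1 hpos
  have hmean : containedMean F (copyEdgeSet H) p ≤ p ^ e * M / 2 := by
    rw [containedMean_copyEdgeSet, mul_div_assoc, mul_comm]
    gcongr
    linarith
  have hΔ : jansonDelta F (copyEdgeSet H) p ≤ M / 2 * (C * M * p ^ (2 * e)) / Φ := by
    rw [le_div_iff₀ hpos]
    refine (jansonDelta_mul_minExpectedCopies_le H F p.2.1).trans ?_
    rw [mul_pow]
    exact mul_le_mul_of_nonneg_right (by linarith) (by positivity)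
  calc G(V, p).real {G | p ^ e * M < numCopies H F G}
      = setBer(Sym2.diagSetᶜ, p).real
          {S | 2 * (p ^ e * M / 2) < containedCount F (copyEdgeSet H) S} := by
        rw [← binomialRandom_real_edgeSet_preimage]
        simp only [Set.mem_ofPred_eq, numCopies_eq_containedCount,
          mul_div_cancel₀ _ (two_ne_zero' ℝ)]
    _ ≤ jansonDelta F (copyEdgeSet H) p / (p ^ e * M / 2) ^ 2 :=
        setBernoulli_real_lt_containedCount_le (fun _ _ => edgeSet_subset_compl_diagSet _)
          (by positivity) hmean
    _ ≤ M / 2 * (C * M * p ^ (2 * e)) / Φ / (p ^ e * M / 2) ^ 2 := by gcongr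
    _ = 2 * C / Φ := by
        have hM : 0 < M := by positivity
        rw [mul_comm 2 e, pow_mul]
        field_simp

end GraphCopies

section Density

variable {W : Type*} {H K : SimpleGraph W} {n p : ℝ}

lemma ncard_edgeSet_lt_ncard_support_or_eq [Fintype W] [DecidableRel H.Adj]
    (hH : H.Connected) (hdeg : ∀ x, H.degree x ≤ 2) (hKH : K ≤ H) (hK : K ≠ ⊥) :
    K.edgeSet.ncard < K.support.ncard ∨
      K.edgeSet.ncard = Fintype.card W ∧ K.support.ncard = Fintype.card W := by
  have hKdeg (x : W) : K.degree x ≤ 2 := (degree_le_of_le hKH).trans (hdeg x)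
  have hsum : ∑ x ∈ K.support.toFinset, K.degree x = 2 * K.edgeSet.ncard := by
    rw [sum_degrees_support_eq_twice_card_edges, ← coe_edgeFinset, Set.ncard_coe_finset]
  have hle : ∑ x ∈ K.support.toFinset, K.degree x ≤ ∑ x ∈ K.support.toFinset, 2 :=
    sum_le_sum fun x _ => hKdeg x
  have hcard : ∑ x ∈ K.support.toFinset, 2 = 2 * K.support.ncard := by
    rw [sum_const, smul_eq_mul, mul_comm, Set.ncard_eq_toFinset_card']
  refine or_iff_not_imp_left.2 fun hnlt => ?_
  have hregular : ∀ x ∈ K.support, K.degree x = 2 := by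
    simpa using (sum_eq_sum_iff_of_le fun x _ => hKdeg x).1 (hle.antisymm (by omega))
  have hclosed : ∀ x ∈ K.support, ∀ y, H.Adj x y → y ∈ K.support := by
    intro x hx y hxy
    have hneighbors : K.neighborFinset x = H.neighborFinset x :=
      eq_of_subset_of_card_le (fun z => by simpa using @hKH x z)
        ((hdeg x).trans_eq (hregular x hx).symm)
    rw [← mem_neighborFinset, ← hneighbors, mem_neighborFinset] at hxy
    exact hxy.mem_support_right
  have huniv : K.support = Set.univ := by
    obtain ⟨x, hx⟩ := Set.nonempty_iff_ne_empty.2 (mt (support_eq_bot_iff _).1 hK)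
    refine Set.eq_univ_of_forall fun y => ?_
    induction (reachable_iff_reflTransGen x y).1 (hH.preconnected x y) with
    | refl => exact hx
    | tail _ hadj ih => exact hclosed _ ih _ hadj
  have hsupport : K.support.ncard = Fintype.card W := by
    rw [huniv, Set.ncard_univ, Nat.card_eq_fintype_card]
  exact ⟨by omega, hsupport⟩

lemma ncard_edgeSet_lt_ncard_support_of_isAcyclic [Finite W] (hK : K.IsAcyclic) (hne : K ≠ ⊥) :
    K.edgeSet.ncard < K.support.ncard := by
  have := Fintype.ofFinite W
  have : Nonempty K.support :=
    (Set.nonempty_iff_ne_empty.2 (mt (support_eq_bot_iff K).1 hne)).to_subtype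
  obtain ⟨T, hle, -, hT⟩ :=
    connected_top.exists_isTree_le_of_le_of_isAcyclic le_top (hK.induce K.support)
  calc K.edgeSet.ncard = #(K.induce K.support).edgeFinset := by
        rw [card_edgeFinset_induce_support, ← coe_edgeFinset, Set.ncard_coe_finset]
    _ ≤ #T.edgeFinset := card_le_card (edgeFinset_mono hle)
    _ < K.support.ncard := by
        rw [Nat.lt_iff_add_one_le, hT.card_edgeFinset, ← Nat.card_eq_fintype_card,
          Nat.card_coe_set_eq]

lemma ne_bot_of_connected [Nontrivial W] (hH : H.Connected) : H ≠ ⊥ := by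
  rintro rfl
  exact not_subsingleton W (connected_bot_iff.1 hH).1

lemma mul_mul_le_pow_mul_pow (hn : 1 ≤ n) (hp : 0 ≤ p) (hnp : 1 ≤ n * p) {v e : ℕ} (he : e ≠ 0)
    (hev : e < v) : n * (n * p) ≤ n ^ v * p ^ e :=
  calc n * (n * p) ≤ n * (n * p) ^ e := by gcongr; exact le_self_pow₀ hnp he
    _ = n ^ (e + 1) * p ^ e := by ring
    _ ≤ n ^ v * p ^ e := by gcongr; exact hev

lemma mul_mul_le_minExpectedCopies [Finite W] (hH : H.IsAcyclic) (hne : H ≠ ⊥)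
    (hn : 1 ≤ n) (hp : 0 ≤ p) (hnp : 1 ≤ n * p) : n * (n * p) ≤ minExpectedCopies H n p :=
  le_minExpectedCopies hne fun _ hKH hK =>
    mul_mul_le_pow_mul_pow hn hp hnp (ncard_edgeSet_ne_zero hK)
      (ncard_edgeSet_lt_ncard_support_of_isAcyclic (hH.anti hKH) hK)

lemma min_le_minExpectedCopies [Fintype W] [Nontrivial W] [DecidableRel H.Adj] (hH : H.Connected)
    (hdeg : ∀ x, H.degree x ≤ 2) (hn : 1 ≤ n) (hp : 0 ≤ p) (hnp : 1 ≤ n * p) :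
    min (n * (n * p)) ((n * p) ^ Fintype.card W) ≤ minExpectedCopies H n p := by
  refine le_minExpectedCopies (ne_bot_of_connected hH) fun K hKH hK => ?_
  rcases ncard_edgeSet_lt_ncard_support_or_eq hH hdeg hKH hK with hlt | ⟨he, hv⟩
  · exact min_le_of_left_le (mul_mul_le_pow_mul_pow hn hp hnp (ncard_edgeSet_ne_zero hK) hlt)
  · exact min_le_of_right_le (by rw [he, hv, mul_pow])

end Density

section Asymptotics

instance {V : Type*} [Finite V] : DiscreteMeasurableSpace (SimpleGraph V) where
  forall_measurableSet s := by
    rw [← Set.preimage_image_eq s measurableEmbedding_edgeSet.injective]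
    exact measurableEmbedding_edgeSet.measurable .of_discrete

lemma erProb_eq_binomialRandom_real (n : ℕ) (p : I) (A : SimpleGraph (Fin n) → Prop) :
    erProb n p A = G(Fin n, p).real {G | A G} := by
  have hcoe : {G | A G} = ((univ.filter A : Finset (SimpleGraph (Fin n))) : Set _) := by simp
  rw [erProb, tsum_fintype, ← sum_filter, hcoe, ← sum_measureReal_singleton]
  refine sum_congr rfl fun G _ => ?_
  rw [measureReal_def, binomialRandom_singleton]
  simp

/-- The random graph `G(n, p n)` has the property `Q n` asymptotically almost surely. -/
def Aas (p : ℕ → I) (Q : ∀ n, SimpleGraph (Fin n) → Prop) : Prop :=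
  Tendsto (fun n => G(Fin n, p n).real {G | Q n G}) atTop (𝓝 1)

variable {p : ℕ → I} {Q Q' : ∀ n, SimpleGraph (Fin n) → Prop}

lemma aas_iff_tendsto_compl :
    Aas p Q ↔ Tendsto (fun n => G(Fin n, p n).real {G | ¬ Q n G}) atTop (𝓝 0) := by
  have hcompl (n : ℕ) : G(Fin n, p n).real {G | ¬ Q n G} = 1 - G(Fin n, p n).real {G | Q n G} :=
    probReal_compl_eq_one_sub .of_discrete
  simp only [hcompl, Aas]
  constructor
  · intro h
    simpa using h.const_sub 1
  · intro h
    simpa using h.const_sub 1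

lemma aas_of_compl_le {f : ℕ → ℝ} (hf : Tendsto f atTop (𝓝 0))
    (h : ∀ᶠ n in atTop, G(Fin n, p n).real {G | ¬ Q n G} ≤ f n) : Aas p Q :=
  aas_iff_tendsto_compl.2 <| squeeze_zero' (.of_forall fun _ => measureReal_nonneg) h hf

lemma Aas.mono (h : Aas p Q) (hQ : ∀ n G, Q n G → Q' n G) : Aas p Q' :=
  aas_of_compl_le (aas_iff_tendsto_compl.1 h) <| .of_forall fun n =>
    measureReal_mono fun G => mt (hQ n G)

lemma Aas.and (h : Aas p Q) (h' : Aas p Q') : Aas p fun n G => Q n G ∧ Q' n G := by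
  have hsum := (aas_iff_tendsto_compl.1 h).add (aas_iff_tendsto_compl.1 h')
  rw [add_zero] at hsum
  refine aas_of_compl_le hsum (.of_forall fun n => ?_)
  exact (measureReal_mono fun G => not_and_or.1).trans (measureReal_union_le _ _)

lemma aas_forall_mem_finset {κ : Type*} {Q : κ → ∀ n, SimpleGraph (Fin n) → Prop} (s : Finset κ)
    (h : ∀ k ∈ s, Aas p (Q k)) : Aas p fun n G => ∀ k ∈ s, Q k n G := by
  induction s using Finset.induction_on with
  | empty => simp [Aas]
  | insert k s _ ih =>
    simp only [forall_mem_insert] at h ⊢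
    exact h.1.and (ih h.2)

variable {W V : Type*} [Fintype W]

lemma aas_numCopies_le {H : SimpleGraph W}
    (hΦ : Tendsto (fun n : ℕ => minExpectedCopies H n (p n)) atTop atTop)
    {F : ∀ n, Finset (W ↪ Fin n)} (hF : ∀ n, 2 * #(F n) ≤ n ^ Fintype.card W) :
    Aas p fun n G =>
      (numCopies H (F n) G : ℝ) ≤ p n ^ H.edgeSet.ncard * (n : ℝ) ^ Fintype.card W := by
  refine aas_of_compl_le (hΦ.const_div_atTop (2 * (Fintype.card W + 1 : ℝ) ^ Fintype.card W)) ?_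
  filter_upwards [hΦ.eventually_gt_atTop 0] with n hpos
  simp only [not_le]
  rw [← Fintype.card_fin n] at hpos
  have hFn : 2 * (#(F n) : ℝ) ≤ (Fintype.card (Fin n) : ℝ) ^ Fintype.card W := by
    rw [Fintype.card_fin]
    exact_mod_cast hF n
  simpa only [Fintype.card_fin] using binomialRandom_real_lt_numCopies_le hpos hFn

lemma two_mul_card_filter_apply_lt_le [Fintype V] [LinearOrder V] (a b : W) :
    2 * #{v : W ↪ V | v a < v b} ≤ Fintype.card V ^ Fintype.card W := by
  have hswap : #{v : W ↪ V | v a < v b} = #{v : W ↪ V | v b < v a} :=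
    card_equiv ((Equiv.swap a b).embeddingCongr (Equiv.refl V)) fun v => by simp
  have hdisj : Disjoint (univ.filter fun v : W ↪ V => v a < v b)
      (univ.filter fun v => v b < v a) :=
    disjoint_filter.2 fun v _ => lt_asymm
  calc 2 * #{v : W ↪ V | v a < v b} = #{v : W ↪ V | v a < v b} + #{v : W ↪ V | v b < v a} := by
        rw [two_mul, ← hswap]
    _ ≤ Fintype.card (W ↪ V) := (card_union_of_disjoint hdisj).symm.trans_le (card_le_univ _)
    _ ≤ Fintype.card (W → V) := Fintype.card_le_of_injective _ DFunLike.coe_injective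
    _ = Fintype.card V ^ Fintype.card W := Fintype.card_fun

variable [Fintype V]

/-- The embeddings that place every vertex `i` of a pattern in its prescribed set `U i`. -/
noncomputable def transversals (U : W → Finset V) : Finset (W ↪ V) :=
  {v : W ↪ V | ∀ i, v i ∈ U i}

lemma card_transversals {U : W → Finset V} (hU : Pairwise (Function.onFun Disjoint U)) :
    #(transversals U) = ∏ i, #(U i) := by
  rw [← Fintype.card_piFinset, ← card_map ⟨_, DFunLike.coe_injective⟩]
  congr 1
  ext f
  simp only [transversals, Finset.mem_map, mem_filter_univ, Function.Embedding.coeFn_mk,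
    Fintype.mem_piFinset]
  refine ⟨fun ⟨_, hv, hvf⟩ => hvf ▸ hv, fun hf => ⟨⟨f, fun i j hij => ?_⟩, hf, rfl⟩⟩
  by_contra hne
  exact disjoint_left.1 (hU hne) (hf i) (hij ▸ hf j)

/-- Every family of pairwise disjoint vertex sets of density at least `c` in `G` spans at least
half the number of transversal copies of `H` that is expected at edge density `p`. -/
def HasManyTransversalCopies (H : SimpleGraph W) (c p : ℝ) (G : SimpleGraph V) : Prop :=
  ∀ U : W → Finset V, Pairwise (Function.onFun Disjoint U) → (∀ i, c * Fintype.card V ≤ #(U i)) →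
    1 / 2 * p ^ H.edgeSet.ncard * ∏ i, (#(U i) : ℝ) ≤ numCopies H (transversals U) G

variable {H : SimpleGraph W} {c : ℝ}

lemma binomialRandom_real_numCopies_transversals_lt_le (hc : 0 ≤ c) {p : I}
    (hpos : 0 < minExpectedCopies H (Fintype.card V) p) {U : W → Finset V}
    (hU : Pairwise (Function.onFun Disjoint U)) (hdense : ∀ i, c * Fintype.card V ≤ #(U i)) :
    G(V, p).real {G | (numCopies H (transversals U) G : ℝ) <
        1 / 2 * p ^ H.edgeSet.ncard * ∏ i, (#(U i) : ℝ)} ≤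
      Real.exp (-(c ^ Fintype.card W * minExpectedCopies H (Fintype.card V) p /
        (8 * (Fintype.card W + 1) ^ Fintype.card W))) := by
  have hn := (pos_and_pos_of_minExpectedCopies_pos (Nat.cast_nonneg _) p.2.1 hpos).1
  have hcard : (#(transversals U) : ℝ) = ∏ i, (#(U i) : ℝ) := by
    rw [card_transversals hU, Nat.cast_prod]
  have hcard_ge : (c * Fintype.card V) ^ Fintype.card W ≤ (#(transversals U) : ℝ) := by
    rw [hcard]
    exact (prod_const _).symm.trans_le
      (prod_le_prod (fun _ _ => by positivity) fun i _ => hdense i)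
  rw [← hcard]
  refine (binomialRandom_real_numCopies_lt_le hpos).trans (Real.exp_le_exp.2 (neg_le_neg ?_))
  calc c ^ Fintype.card W * minExpectedCopies H (Fintype.card V) p /
          (8 * (Fintype.card W + 1) ^ Fintype.card W)
      = (c * Fintype.card V) ^ Fintype.card W * minExpectedCopies H (Fintype.card V) p /
          (8 * ((Fintype.card W + 1) * Fintype.card V) ^ Fintype.card W) := by
        rw [mul_pow, mul_pow]
        field_simp
    _ ≤ _ := by gcongr

lemma binomialRandom_real_not_hasManyTransversalCopies_le (hc : 0 ≤ c) {p : I}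
    (hpos : 0 < minExpectedCopies H (Fintype.card V) p) :
    G(V, p).real {G | ¬ HasManyTransversalCopies H c p G} ≤
      (2 ^ Fintype.card V) ^ Fintype.card W *
        Real.exp (-(c ^ Fintype.card W * minExpectedCopies H (Fintype.card V) p /
          (8 * (Fintype.card W + 1) ^ Fintype.card W))) := by
  set bound := Real.exp (-(c ^ Fintype.card W * minExpectedCopies H (Fintype.card V) p /
    (8 * (Fintype.card W + 1) ^ Fintype.card W)))
  let families : Finset (W → Finset V) :=
    {U | Pairwise (Function.onFun Disjoint U) ∧ ∀ i, c * Fintype.card V ≤ #(U i)}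
  let fewCopies (U : W → Finset V) : Set (SimpleGraph V) :=
    {G | (numCopies H (transversals U) G : ℝ) < 1 / 2 * p ^ H.edgeSet.ncard * ∏ i, (#(U i) : ℝ)}
  have hfewCopies : ∀ U ∈ families, G(V, p).real (fewCopies U) ≤ bound := fun U hU =>
    binomialRandom_real_numCopies_transversals_lt_le hc hpos (mem_filter_univ _ |>.1 hU).1
      (mem_filter_univ _ |>.1 hU).2
  have hunion : {G | ¬ HasManyTransversalCopies H c p G} ⊆ ⋃ U ∈ families, fewCopies U := by
    intro G hG
    simp only [HasManyTransversalCopies, Set.mem_ofPred_eq, not_forall, not_le] at hG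
    obtain ⟨U, hU, hdense, hlt⟩ := hG
    exact Set.mem_biUnion (mem_filter_univ _ |>.2 ⟨hU, hdense⟩) hlt
  calc G(V, p).real {G | ¬ HasManyTransversalCopies H c p G}
      ≤ ∑ U ∈ families, G(V, p).real (fewCopies U) :=
        (measureReal_mono hunion (measure_ne_top _ _)).trans (measureReal_biUnion_finset_le _ _)
    _ ≤ #families * bound := by
        rw [← nsmul_eq_mul]
        exact sum_le_card_nsmul _ _ _ hfewCopies
    _ ≤ (2 ^ Fintype.card V) ^ Fintype.card W * bound := by
        gcongr
        exact_mod_cast (card_le_univ families).trans_eq (by simp)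

lemma aas_hasManyTransversalCopies (hc : 0 < c)
    (hΦ : Tendsto (fun n : ℕ => minExpectedCopies H n (p n) / n) atTop atTop) :
    Aas p fun n => HasManyTransversalCopies H c (p n) := by
  set m := Fintype.card W
  set K : ℝ := c ^ m / (8 * (m + 1) ^ m)
  have hK : 0 < K := by positivity
  have hexponent : Tendsto (fun n : ℕ =>
      n * (K * (minExpectedCopies H n (p n) / n) + -(m * Real.log 2))) atTop atTop :=
    tendsto_natCast_atTop_atTop.atTop_mul_atTop₀
      (tendsto_atTop_add_const_right _ _ (hΦ.const_mul_atTop hK))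
  refine aas_of_compl_le (Real.tendsto_exp_neg_atTop_nhds_zero.comp hexponent) ?_
  filter_upwards [hΦ.eventually_gt_atTop 0, eventually_gt_atTop 0] with n hΦn hn
  have hpos : 0 < minExpectedCopies H (Fintype.card (Fin n)) (p n) := by
    rw [Fintype.card_fin]
    exact (div_pos_iff_of_pos_right (Nat.cast_pos.2 hn)).1 hΦn
  refine (binomialRandom_real_not_hasManyTransversalCopies_le hc.le hpos).trans_eq ?_
  have hpow : ((2 : ℝ) ^ n) ^ m = Real.exp (n * (m * Real.log 2)) := by
    rw [Real.exp_nat_mul, Real.exp_nat_mul, Real.exp_log two_pos, pow_right_comm]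
  rw [Fintype.card_fin, hpow, ← Real.exp_add, Function.comp_apply]
  congr 1
  simp only [K]
  field_simp
  ring

end Asymptotics

section Threshold

variable {ℓ₀ ℓ n : ℕ} {p : ℕ → ℝ}

lemma inv_le_pCrit (ℓ₀ ℓ : ℕ) (hn : 0 < n) : (n : ℝ)⁻¹ ≤ pCrit ℓ₀ ℓ n := by
  unfold pCrit
  split_ifs
  · rw [← Real.rpow_neg_one]
    refine Real.rpow_le_rpow_of_exponent_le (Nat.one_le_cast.2 hn) (neg_le_neg ?_)
    exact div_le_one_of_le₀ (by linarith) (Nat.cast_nonneg ℓ)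
  · rfl

lemma mul_pCrit_pow (hℓ : ℓ ≠ 0) (hlt : ℓ < ℓ₀) (hn : 0 < n) :
    n ^ ℓ * pCrit ℓ₀ ℓ n ^ ℓ = n := by
  have hn0 : (0 : ℝ) < n := Nat.cast_pos.2 hn
  have hexponent : (1 + -(((ℓ : ℝ) - 1) / ℓ)) * ℓ = 1 := by field_simp; ring
  rw [pCrit, if_pos hlt, ← mul_pow,
    ← Real.rpow_one_add' hn0.le (left_ne_zero_of_mul_eq_one hexponent),
    ← Real.rpow_mul_natCast hn0.le, hexponent, Real.rpow_one]

lemma tendsto_mul_of_tendsto_div_pCrit (hp0 : ∀ n, 0 ≤ p n)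
    (hp : Tendsto (fun n => p n / pCrit ℓ₀ ℓ n) atTop atTop) :
    Tendsto (fun n : ℕ => n * p n) atTop atTop := by
  refine tendsto_atTop_mono' _ ?_ hp
  filter_upwards [eventually_gt_atTop 0] with n hn
  calc p n / pCrit ℓ₀ ℓ n ≤ p n / (n : ℝ)⁻¹ :=
        div_le_div_of_nonneg_left (hp0 n) (by positivity) (inv_le_pCrit ℓ₀ ℓ hn)
    _ = n * p n := by rw [div_inv_eq_mul, mul_comm]

lemma tendsto_pow_div_of_tendsto_div_pCrit (hp0 : ∀ n, 0 ≤ p n)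
    (hp : Tendsto (fun n => p n / pCrit ℓ₀ ℓ n) atTop atTop) (hℓ : ℓ ≠ 0) (hlt : ℓ < ℓ₀) {k : ℕ}
    (hk : ℓ ≤ k) : Tendsto (fun n : ℕ => (n * p n) ^ k / n) atTop atTop := by
  have hnp := tendsto_mul_of_tendsto_div_pCrit hp0 hp
  refine tendsto_atTop_mono' _ ?_ ((tendsto_pow_atTop hℓ).comp hp)
  filter_upwards [eventually_gt_atTop 0, hnp.eventually_ge_atTop 1] with n hn hnp1
  calc (p n / pCrit ℓ₀ ℓ n) ^ ℓ = (n * p n) ^ ℓ / (n ^ ℓ * pCrit ℓ₀ ℓ n ^ ℓ) := by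
        rw [div_pow, mul_pow]; field_simp
    _ = (n * p n) ^ ℓ / n := by rw [mul_pCrit_pow hℓ hlt hn]
    _ ≤ (n * p n) ^ k / n := by gcongr

variable {W : Type*} {H : SimpleGraph W}

lemma tendsto_minExpectedCopies_div_of_isAcyclic [Finite W] (hH : H.IsAcyclic) (hne : H ≠ ⊥)
    (hp0 : ∀ n, 0 ≤ p n) (hnp : Tendsto (fun n : ℕ => n * p n) atTop atTop) :
    Tendsto (fun n : ℕ => minExpectedCopies H n (p n) / n) atTop atTop := by
  refine tendsto_atTop_mono' _ ?_ hnp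
  filter_upwards [eventually_gt_atTop 0, hnp.eventually_ge_atTop 1] with n hn hnp1
  have hn1 : (1 : ℝ) ≤ n := Nat.one_le_cast.2 hn
  rw [le_div_iff₀' (by positivity)]
  exact mul_mul_le_minExpectedCopies hH hne hn1 (hp0 n) hnp1

lemma tendsto_minExpectedCopies_of_isAcyclic [Finite W] (hH : H.IsAcyclic) (hne : H ≠ ⊥)
    (hp0 : ∀ n, 0 ≤ p n) (hnp : Tendsto (fun n : ℕ => n * p n) atTop atTop) :
    Tendsto (fun n : ℕ => minExpectedCopies H n (p n)) atTop atTop := by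
  refine (tendsto_natCast_atTop_atTop.atTop_mul_atTop₀
    (tendsto_minExpectedCopies_div_of_isAcyclic hH hne hp0 hnp)).congr' ?_
  filter_upwards [eventually_ne_atTop 0] with n hn
  exact mul_div_cancel₀ _ (Nat.cast_ne_zero.2 hn)

variable [Fintype W] [Nontrivial W] [DecidableRel H.Adj]

lemma tendsto_minExpectedCopies_of_connected (hH : H.Connected) (hdeg : ∀ x, H.degree x ≤ 2)
    (hp0 : ∀ n, 0 ≤ p n) (hnp : Tendsto (fun n : ℕ => n * p n) atTop atTop) :
    Tendsto (fun n : ℕ => minExpectedCopies H n (p n)) atTop atTop := by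
  refine tendsto_atTop_mono' _ ?_ hnp
  filter_upwards [eventually_gt_atTop 0, hnp.eventually_ge_atTop 1] with n hn hnp1
  have hn1 : (1 : ℝ) ≤ n := Nat.one_le_cast.2 hn
  refine le_trans (le_min ?_ ?_) (min_le_minExpectedCopies hH hdeg hn1 (hp0 n) hnp1)
  · exact le_mul_of_one_le_left (by positivity) hn1
  · exact le_self_pow₀ hnp1 Fintype.card_ne_zero

lemma tendsto_minExpectedCopies_div_of_connected (hH : H.Connected) (hdeg : ∀ x, H.degree x ≤ 2)
    (hp0 : ∀ n, 0 ≤ p n) (hnp : Tendsto (fun n : ℕ => n * p n) atTop atTop)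
    (hpow : Tendsto (fun n : ℕ => (n * p n) ^ Fintype.card W / n) atTop atTop) :
    Tendsto (fun n : ℕ => minExpectedCopies H n (p n) / n) atTop atTop := by
  refine tendsto_atTop.2 fun x => ?_
  filter_upwards [eventually_gt_atTop 0, hnp.eventually_ge_atTop 1, hnp.eventually_ge_atTop x,
    hpow.eventually_ge_atTop x] with n hn hnp1 hx hx'
  have hn1 : (1 : ℝ) ≤ n := Nat.one_le_cast.2 hn
  calc x ≤ min (n * p n) ((n * p n) ^ Fintype.card W / n) := le_min hx hx'
    _ = min (n * (n * p n)) ((n * p n) ^ Fintype.card W) / n := by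
        rw [← min_div_div_right (by positivity), mul_div_cancel_left₀ _ (by positivity)]
    _ ≤ minExpectedCopies H n (p n) / n := by
        gcongr
        exact min_le_minExpectedCopies hH hdeg hn1 (hp0 n) hnp1

end Threshold

section Patterns

variable {n k : ℕ} {c p : ℝ} {G : SimpleGraph (Fin n)}

lemma degree_cycleGraph (hk : 3 ≤ k) (i : Fin k) : (cycleGraph k).degree i = 2 := by
  obtain ⟨m, rfl⟩ := Nat.exists_eq_add_of_le' hk
  convert cycleGraph_degree_three_le

lemma connected_cycleGraph (hk : 0 < k) : (cycleGraph k).Connected := by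
  obtain ⟨m, rfl⟩ := Nat.exists_eq_add_of_le' hk
  exact cycleGraph_connected

lemma ncard_edgeSet_cycleGraph (hk : 3 ≤ k) : (cycleGraph k).edgeSet.ncard = k := by
  have h := (cycleGraph k).sum_degrees_eq_twice_card_edges
  simp only [degree_cycleGraph hk, sum_const, card_univ, Fintype.card_fin, smul_eq_mul] at h
  rw [← coe_edgeFinset, Set.ncard_coe_finset]
  omega

lemma ncard_edgeSet_starGraph (r : Fin (k + 1)) : (starGraph r).edgeSet.ncard = k := by
  have h := (isTree_starGraph r).card_edgeFinset
  rw [← coe_edgeFinset, Set.ncard_coe_finset]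
  simpa using h

variable {W V : Type*}

lemma map_cycleGraph_le_iff {k : ℕ} {v : Fin k ↪ V} {G : SimpleGraph V} (hk : 2 ≤ k) :
    (cycleGraph k).map v ≤ G ↔
      ∀ i : Fin k, G.Adj (v i) (v (i + ⟨1 % k, Nat.mod_lt 1 i.pos⟩)) := by
  obtain ⟨m, rfl⟩ := Nat.exists_eq_add_of_le' hk
  refine map_le_iff_le_comap _ _ _ |>.trans
    ⟨fun h i => h (cycleGraph_adj.2 (.inr (add_sub_cancel_left i 1))), fun h i j hij => ?_⟩
  rcases cycleGraph_adj.1 hij with hij | hij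
  · obtain rfl : i = j + 1 := by rw [← hij, add_sub_cancel]
    exact (h j).symm
  · obtain rfl : j = i + 1 := by rw [← hij, add_sub_cancel]
    exact h i

lemma map_starGraph_le_iff {v : W ↪ V} {G : SimpleGraph V} {r : W} :
    (starGraph r).map v ≤ G ↔ ∀ i, i ≠ r → G.Adj (v r) (v i) := by
  refine map_le_iff_le_comap _ _ _ |>.trans
    ⟨fun h i hi => h (starGraph_adj.2 ⟨hi.symm, .inl rfl⟩), fun h i j hij => ?_⟩
  obtain ⟨hne, rfl | rfl⟩ := starGraph_adj.1 hij
  · exact h j hne.symm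
  · exact (h i hne).symm

lemma edgesBetween_ge (hG : HasManyTransversalCopies (starGraph (0 : Fin 2)) c p G)
    {V₁ V₂ : Finset (Fin n)} (h₁₂ : Disjoint V₁ V₂) (h₁ : c * n ≤ #V₁) (h₂ : c * n ≤ #V₂) :
    p / 2 * #V₁ * #V₂ ≤ edgesBetween G V₁ V₂ := by
  have hcopies := hG ![V₁, V₂]
    (by simp [Pairwise, Function.onFun, Fin.forall_fin_two, h₁₂, h₁₂.symm])
    (by simp [Fin.forall_fin_two, h₁, h₂])
  have hle : numCopies (starGraph 0) (transversals ![V₁, V₂]) G ≤ edgesBetween G V₁ V₂ := by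
    refine card_le_card_of_injOn (fun v => (v 0, v 1)) (fun v hv => ?_) fun v _ w _ hvw => ?_
    · simpa [transversals, map_starGraph_le_iff, Fin.forall_fin_two] using hv
    · ext i
      fin_cases i <;> simp_all
  simp only [ncard_edgeSet_starGraph, Fin.prod_univ_two, Matrix.cons_val_zero,
    Matrix.cons_val_one] at hcopies
  calc p / 2 * #V₁ * #V₂ = 1 / 2 * p ^ 1 * (#V₁ * #V₂) := by ring
    _ ≤ _ := hcopies.trans (Nat.cast_le.2 hle)

lemma cherriesBetween_ge (hG : HasManyTransversalCopies (starGraph (0 : Fin 3)) c p G)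
    {V₁ V₂ V₃ : Finset (Fin n)} (h₁₂ : Disjoint V₁ V₂) (h₁₃ : Disjoint V₁ V₃)
    (h₂₃ : Disjoint V₂ V₃) (h₁ : c * n ≤ #V₁) (h₂ : c * n ≤ #V₂) (h₃ : c * n ≤ #V₃) :
    p ^ 2 / 4 * #V₁ * #V₂ * #V₃ ≤ cherriesBetween G V₁ V₂ V₃ := by
  have hcopies := hG ![V₁, V₂, V₃]
    (by simp [Pairwise, Function.onFun, Fin.forall_fin_succ, h₁₂, h₁₃, h₂₃, h₁₂.symm, h₁₃.symm,
      h₂₃.symm])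
    (by simp [Fin.forall_fin_succ, h₁, h₂, h₃])
  have hle : numCopies (starGraph 0) (transversals ![V₁, V₂, V₃]) G
      ≤ cherriesBetween G V₁ V₂ V₃ := by
    refine card_le_card_of_injOn (fun v => (v 0, v 1, v 2)) (fun v hv => ?_) fun v _ w _ hvw => ?_
    · simpa [transversals, map_starGraph_le_iff, Fin.forall_fin_succ, and_assoc] using hv
    · ext i
      fin_cases i <;> simp_all
  simp only [ncard_edgeSet_starGraph, Fin.prod_univ_three, Matrix.cons_val_zero,
    Matrix.cons_val_one, Matrix.cons_val] at hcopies
  calc p ^ 2 / 4 * #V₁ * #V₂ * #V₃ ≤ 1 / 2 * p ^ 2 * (#V₁ * #V₂ * #V₃) := by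
        have : 0 ≤ p ^ 2 * ((#V₁ : ℝ) * #V₂ * #V₃) := by positivity
        linarith
    _ ≤ _ := hcopies.trans (Nat.cast_le.2 hle)

lemma cyclesBetween_ge (hk : 3 ≤ k) (hG : HasManyTransversalCopies (cycleGraph k) c p G)
    {U : Fin k → Finset (Fin n)} (hU : ∀ i j, i ≠ j → Disjoint (U i) (U j))
    (hdense : ∀ i, c * n ≤ #(U i)) :
    1 / 2 * p ^ k * ∏ i, (#(U i) : ℝ) ≤ cyclesBetween G k U := by
  have hcopies := hG U hU (by simpa using hdense)
  have hle : numCopies (cycleGraph k) (transversals U) G ≤ cyclesBetween G k U := by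
    refine card_le_card_of_injOn (fun v => v) (fun v hv => ?_) fun v _ w _ => DFunLike.coe_fn_eq.1
    simpa [transversals, map_cycleGraph_le_iff (Nat.le_of_succ_le hk)] using hv
  rw [ncard_edgeSet_cycleGraph hk] at hcopies
  exact hcopies.trans (Nat.cast_le.2 hle)

lemma cherryCount_le_numCopies (G : SimpleGraph (Fin n)) :
    cherryCount G ≤ numCopies (starGraph (0 : Fin 3)) {v : Fin 3 ↪ Fin n | v 1 < v 2} G := by
  refine card_le_card_of_surjOn (fun v => (v 0, v 1, v 2)) ?_
  rintro ⟨a, b, c⟩ h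
  obtain ⟨hab, hac, hbc⟩ := (mem_filter.1 h).2
  refine ⟨⟨![a, b, c], ?_⟩, ?_, rfl⟩
  · intro i j hij
    have := hab.ne; have := hac.ne; have := hbc.ne
    fin_cases i <;> fin_cases j <;> simp_all [eq_comm]
  · have hcopy : b < c ∧ G.Adj a b ∧ G.Adj a c := ⟨hbc, hab, hac⟩
    simpa [map_starGraph_le_iff, Fin.forall_fin_succ] using! hcopy

lemma triangleCount_le_numCopies (G : SimpleGraph (Fin n)) :
    triangleCount G ≤ numCopies (cycleGraph 3) {v : Fin 3 ↪ Fin n | v 0 < v 1} G := by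
  refine card_le_card_of_surjOn (fun v => (v 0, v 1, v 2)) ?_
  rintro ⟨a, b, c⟩ h
  obtain ⟨hlt, -, hab, hac, hbc⟩ := (mem_filter.1 h).2
  refine ⟨⟨![a, b, c], ?_⟩, ?_, rfl⟩
  · intro i j hij
    have := hab.ne; have := hac.ne; have := hbc.ne
    fin_cases i <;> fin_cases j <;> simp_all [eq_comm]
  · have hcopy : a < b ∧ G.Adj a b ∧ G.Adj b c ∧ G.Adj c a := ⟨hlt, hab, hbc, hac.symm⟩
    simpa [map_cycleGraph_le_iff, Fin.forall_fin_succ] using! hcopy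

lemma c4Count_le_numCopies (G : SimpleGraph (Fin n)) :
    c4Count G ≤ numCopies (cycleGraph 4) {v : Fin 4 ↪ Fin n | v 1 < v 3} G := by
  refine card_le_card_of_surjOn (fun v => (v 0, v 1, v 2, v 3)) ?_
  rintro ⟨a, b, c, d⟩ h
  obtain ⟨hab, hbc, hcd, hda, -, hac, -, hbd⟩ := (mem_filter.1 h).2
  refine ⟨⟨![a, b, c, d], ?_⟩, ?_, rfl⟩
  · intro i j hij
    have := hab.ne; have := hbc.ne; have := hcd.ne; have := hda.ne; have := hac.ne; have := hbd.ne
    fin_cases i <;> fin_cases j <;> simp_all [eq_comm]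
  · have hcopy : b < d ∧ G.Adj a b ∧ G.Adj b c ∧ G.Adj c d ∧ G.Adj d a :=
      ⟨hbd, hab, hbc, hcd, hda⟩
    simpa [map_cycleGraph_le_iff, Fin.forall_fin_succ] using! hcopy

lemma isABGraph_of_hasManyTransversalCopies {ℓ₀ ℓ : ℕ} (hℓ : 3 ≤ ℓ)
    (hedges : HasManyTransversalCopies (starGraph (0 : Fin 2)) (ℓ₀ : ℝ)⁻¹ p G)
    (hcherries : HasManyTransversalCopies (starGraph (0 : Fin 3)) (ℓ₀ : ℝ)⁻¹ p G)
    (hcycles : ∀ k, ℓ ≤ k → k < ℓ₀ →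
      HasManyTransversalCopies (cycleGraph k) ((ℓ₀ : ℝ) ^ 2)⁻¹ p G)
    (hcherry : (cherryCount G : ℝ) ≤ p ^ 2 * (n : ℝ) ^ 3)
    (htriangle : (triangleCount G : ℝ) ≤ p ^ 3 * (n : ℝ) ^ 3)
    (hc4 : (c4Count G : ℝ) ≤ p ^ 4 * (n : ℝ) ^ 4) : IsABGraph n p ℓ₀ ℓ G := by
  simp only [IsABGraph, ← inv_mul_eq_div (_ : ℝ) (n : ℝ)]
  exact ⟨fun V₁ V₂ => edgesBetween_ge hedges,
    ⟨fun V₁ V₂ V₃ => cherriesBetween_ge hcherries, hcherry⟩,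
    fun k hℓk hk U => cyclesBetween_ge (hℓ.trans hℓk) (hcycles k hℓk hk), htriangle, hc4⟩

end Patterns

section PatternThresholds

variable {p : ℕ → I}

lemma aas_numCopies_filter_apply_lt_le {W : Type*} [Fintype W] {H : SimpleGraph W}
    (hΦ : Tendsto (fun n : ℕ => minExpectedCopies H n (p n)) atTop atTop) (a b : W) :
    Aas p fun n G => (numCopies H {v : W ↪ Fin n | v a < v b} G : ℝ) ≤
      p n ^ H.edgeSet.ncard * (n : ℝ) ^ Fintype.card W :=
  aas_numCopies_le hΦ fun n => by
    simpa using two_mul_card_filter_apply_lt_le (V := Fin n) a b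

lemma aas_cherryCount_le (hnp : Tendsto (fun n : ℕ => n * (p n : ℝ)) atTop atTop) :
    Aas p fun n G => (cherryCount G : ℝ) ≤ p n ^ 2 * (n : ℝ) ^ 3 := by
  have hcopies := aas_numCopies_filter_apply_lt_le (tendsto_minExpectedCopies_of_isAcyclic
    (isAcyclic_starGraph (0 : Fin 3)) (ne_bot_of_connected (connected_starGraph 0))
    (fun n => (p n).2.1) hnp) 1 2
  simp only [ncard_edgeSet_starGraph, Fintype.card_fin] at hcopies
  exact hcopies.mono fun _ G => (Nat.cast_le.2 (cherryCount_le_numCopies G)).trans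

lemma aas_numCopies_cycleGraph_le {k : ℕ} (hk : 3 ≤ k) (a b : Fin k)
    (hnp : Tendsto (fun n : ℕ => n * (p n : ℝ)) atTop atTop) :
    Aas p fun n G => (numCopies (cycleGraph k) {v : Fin k ↪ Fin n | v a < v b} G : ℝ) ≤
      p n ^ k * (n : ℝ) ^ k := by
  have : Nontrivial (Fin k) := Fin.nontrivial_iff_two_le.2 (Nat.le_of_succ_le hk)
  have hcopies := aas_numCopies_filter_apply_lt_le (tendsto_minExpectedCopies_of_connected
    (connected_cycleGraph (Nat.zero_lt_of_lt hk)) (fun i => (degree_cycleGraph hk i).le)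
    (fun n => (p n).2.1) hnp) a b
  simpa only [ncard_edgeSet_cycleGraph hk, Fintype.card_fin] using hcopies

lemma aas_triangleCount_le (hnp : Tendsto (fun n : ℕ => n * (p n : ℝ)) atTop atTop) :
    Aas p fun n G => (triangleCount G : ℝ) ≤ p n ^ 3 * (n : ℝ) ^ 3 :=
  (aas_numCopies_cycleGraph_le le_rfl 0 1 hnp).mono fun _ G =>
    (Nat.cast_le.2 (triangleCount_le_numCopies G)).trans

lemma aas_c4Count_le (hnp : Tendsto (fun n : ℕ => n * (p n : ℝ)) atTop atTop) :
    Aas p fun n G => (c4Count G : ℝ) ≤ p n ^ 4 * (n : ℝ) ^ 4 :=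
  (aas_numCopies_cycleGraph_le (Nat.le_succ 3) 1 3 hnp).mono fun _ G =>
    (Nat.cast_le.2 (c4Count_le_numCopies G)).trans

lemma aas_hasManyTransversalCopies_starGraph {W : Type*} [Fintype W] [Nontrivial W] (r : W)
    {c : ℝ} (hc : 0 < c) (hnp : Tendsto (fun n : ℕ => n * (p n : ℝ)) atTop atTop) :
    Aas p fun n => HasManyTransversalCopies (starGraph r) c (p n) :=
  aas_hasManyTransversalCopies hc (tendsto_minExpectedCopies_div_of_isAcyclic
    (isAcyclic_starGraph r) (ne_bot_of_connected (connected_starGraph r))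
    (fun n => (p n).2.1) hnp)

lemma aas_hasManyTransversalCopies_cycleGraph {c : ℝ} (hc : 0 < c) {ℓ₀ ℓ k : ℕ} (hℓ : 3 ≤ ℓ)
    (hlt : ℓ < ℓ₀) (hk : ℓ ≤ k)
    (hp : Tendsto (fun n => (p n : ℝ) / pCrit ℓ₀ ℓ n) atTop atTop) :
    Aas p fun n => HasManyTransversalCopies (cycleGraph k) c (p n) := by
  have hk3 : 3 ≤ k := hℓ.trans hk
  have : Nontrivial (Fin k) := Fin.nontrivial_iff_two_le.2 (Nat.le_of_succ_le hk3)
  have hp0 := fun n => (p n).2.1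
  refine aas_hasManyTransversalCopies hc (tendsto_minExpectedCopies_div_of_connected
    (connected_cycleGraph (Nat.zero_lt_of_lt hk3)) (fun i => (degree_cycleGraph hk3 i).le) hp0
    (tendsto_mul_of_tendsto_div_pCrit hp0 hp) ?_)
  simpa only [Fintype.card_fin] using
    tendsto_pow_div_of_tendsto_div_pCrit hp0 hp (Nat.ne_zero_of_lt hℓ) hlt hk

end PatternThresholds

/-- For integers `ℓ₀ > 0`, `ℓ ≥ 3` and `p = ω(p_{ℓ₀,ℓ}(n))`, a.a.s. the random graph
`G(n,p)` is an `(n, p, ℓ₀, ℓ)`-graph. -/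
theorem aas_isABGraph (ℓ₀ ℓ : ℕ) (hℓ₀ : 0 < ℓ₀) (hℓ : 3 ≤ ℓ) (p : ℕ → ℝ)
    (hp0 : ∀ n, 0 ≤ p n) (hp1 : ∀ n, p n ≤ 1)
    (hp : Tendsto (fun n : ℕ => p n / pCrit ℓ₀ ℓ n) atTop atTop) :
    Tendsto (fun n : ℕ => erProb n (p n) (IsABGraph n (p n) ℓ₀ ℓ)) atTop (nhds 1) := by
  lift p to ℕ → I using fun n => ⟨hp0 n, hp1 n⟩
  suffices h : Aas p fun n => IsABGraph n (p n) ℓ₀ ℓ by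
    simpa only [erProb_eq_binomialRandom_real] using! h
  have hnp := tendsto_mul_of_tendsto_div_pCrit hp0 hp
  have hinv : 0 < (ℓ₀ : ℝ)⁻¹ := by positivity
  have hcycles : Aas p fun n G => ∀ k ∈ Ico ℓ ℓ₀,
      HasManyTransversalCopies (cycleGraph k) ((ℓ₀ : ℝ) ^ 2)⁻¹ (p n) G :=
    aas_forall_mem_finset _ fun k hk => aas_hasManyTransversalCopies_cycleGraph (by positivity) hℓ
      ((mem_Ico.1 hk).1.trans_lt (mem_Ico.1 hk).2) (mem_Ico.1 hk).1 hp
  have hedges := aas_hasManyTransversalCopies_starGraph (0 : Fin 2) hinv hnp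
  have hcherries := aas_hasManyTransversalCopies_starGraph (0 : Fin 3) hinv hnp
  refine ((hedges.and hcherries).and (hcycles.and ((aas_cherryCount_le hnp).and
    ((aas_triangleCount_le hnp).and (aas_c4Count_le hnp))))).mono fun n G hG => ?_
  obtain ⟨⟨hedges, hcherries⟩, hcycles, hcounts⟩ := hG
  exact isABGraph_of_hasManyTransversalCopies hℓ hedges hcherries
    (fun k hℓk hk => hcycles k (mem_Ico.2 ⟨hℓk, hk⟩)) hcounts.1 hcounts.2.1 hcounts.2.2
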